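/- For every natural number n ≥ 1, the function Λ̄ : ℂⁿ → ℝ that maps (a₀, …, a_{n−1}) to the maximum of the real parts of the (complex) roots of the polynomial zⁿ + a_{n−1}z^{n−1} + … + a₁z + a₀ is continuous on ℂⁿ. -/

import Mathlib

/-- `maxRootRe n a` is the maximum of the real parts of the complex roots of the monic
polynomial `zⁿ + a_{n−1}z^{n−1} + … + a₁z + a₀` (realized as the supremum of the nonempty
finite set of real parts of the roots). -/
noncomputable def maxRootRe (n : ℕ) (a : Fin n → ℂ) : ℝ :=
  sSup {x : ℝ | ∃ l : ℂ, l ^ n + ∑ i : Fin n, a i * l ^ (i : ℕ) = 0 ∧ x = l.re}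

open Polynomial in
lemma aux_poly (n : ℕ) (a : Fin n → ℂ) : ∃ p : ℂ[X], p.Monic ∧ p.natDegree = n ∧
    ∀ z, p.eval z = z ^ n + ∑ i : Fin n, a i * z ^ (i : ℕ) := by
  have hd : (∑ i : Fin n, C (a i) * X ^ (i : ℕ) : ℂ[X]).degree < n :=
    Polynomial.degree_sum_fin_lt a
  refine ⟨X ^ n + ∑ i : Fin n, C (a i) * X ^ (i : ℕ), monic_X_pow_add hd, ?_, ?_⟩
  · rw [natDegree_add_eq_left_of_degree_lt (by simpa using hd)]
    simp
  · intro z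
    simp [eval_finsetSum]

lemma aux_prod (z : ℂ) (ε : ℝ) (hε : 0 ≤ ε) (s : Multiset ℂ) :
    (∀ r ∈ s, ε < ‖z - r‖) → s ≠ 0 → ε ^ s.card < ‖(s.map (fun r => z - r)).prod‖ := by
  induction s using Multiset.induction with
  | empty => intro _ h; exact absurd rfl h
  | cons r s ih =>
    intro h _
    have hr := h r (by simp)
    by_cases hs : s = 0
    · subst hs; simpa using hr
    · have := ih (fun x hx => h x (by simp [hx])) hs
      rw [Multiset.card_cons, Multiset.map_cons, Multiset.prod_cons, norm_mul, pow_succ']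
      exact mul_lt_mul'' hr this hε (by positivity)

lemma aux_near (n : ℕ) (hn : 1 ≤ n) (a : Fin n → ℂ) (z : ℂ) (ε : ℝ) (hε : 0 ≤ ε)
    (h : ‖z ^ n + ∑ i : Fin n, a i * z ^ (i : ℕ)‖ ≤ ε ^ n) :
    ∃ r : ℂ, r ^ n + ∑ i : Fin n, a i * r ^ (i : ℕ) = 0 ∧ ‖z - r‖ ≤ ε := by
  obtain ⟨p, hm, hd, he⟩ := aux_poly n a
  by_contra! hc
  have hs := IsAlgClosed.splits p
  have hcard : p.roots.card = n := by rw [← hd]; exact hs.natDegree_eq_card_roots.symm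
  have := aux_prod z ε hε p.roots (fun r hr => hc r (by
    rw [← he]; exact (Polynomial.mem_roots'.1 hr).2)) (by
    intro h0; rw [h0] at hcard; simp at hcard; omega)
  rw [hcard] at this
  rw [← he, hs.eval_eq_prod_roots, hm.leadingCoeff, one_mul] at h
  linarith

lemma aux_bound (n : ℕ) (hn : 1 ≤ n) (a : Fin n → ℂ) (l : ℂ)
    (h : l ^ n + ∑ i : Fin n, a i * l ^ (i : ℕ) = 0) : ‖l‖ ≤ 1 + ∑ i, ‖a i‖ := by
  have hS : 0 ≤ ∑ i, ‖a i‖ := Finset.sum_nonneg fun _ _ => norm_nonneg _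
  by_contra! hc
  have h1 : 1 ≤ ‖l‖ := by linarith
  have h2 : ‖l‖ ^ n ≤ (∑ i, ‖a i‖) * ‖l‖ ^ (n - 1) := by
    rw [← norm_pow, eq_neg_of_add_eq_zero_left h, norm_neg, Finset.sum_mul]
    refine (norm_sum_le _ _).trans (Finset.sum_le_sum fun i _ => ?_)
    rw [norm_mul, norm_pow]
    gcongr
    omega
  obtain ⟨m, rfl⟩ : ∃ m, n = m + 1 := ⟨n - 1, by omega⟩
  rw [pow_succ', Nat.add_sub_cancel] at h2
  have := le_of_mul_le_mul_right h2 (by positivity)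
  linarith

lemma aux_side (n : ℕ) (hn : 1 ≤ n) (a b : Fin n → ℂ) (ε : ℝ) (hε : 0 ≤ ε)
    (h : ∑ i, ‖b i - a i‖ * (1 + ∑ j, ‖a j‖) ^ (i : ℕ) ≤ ε ^ n) :
    maxRootRe n a ≤ maxRootRe n b + ε := by
  unfold maxRootRe
  apply csSup_le
  · obtain ⟨r, hr, -⟩ := aux_near n hn a 0 (1 + ‖(0:ℂ) ^ n + ∑ i : Fin n, a i * 0 ^ (i : ℕ)‖)
      (by positivity) ((le_add_of_nonneg_left zero_le_one).trans
        (le_self_pow₀ (le_add_of_nonneg_right (norm_nonneg _)) (by omega)))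
    exact ⟨_, r, hr, rfl⟩
  · rintro x ⟨l, hl, rfl⟩
    obtain ⟨r, hr, hlr⟩ := aux_near n hn b l ε hε (by
      refine le_trans ?_ h
      have : l ^ n + ∑ i : Fin n, b i * l ^ (i : ℕ) = ∑ i : Fin n, (b i - a i) * l ^ (i : ℕ) := by
        simp only [sub_mul, Finset.sum_sub_distrib]
        linear_combination hl
      rw [this]
      refine (norm_sum_le _ _).trans (Finset.sum_le_sum fun i _ => ?_)
      rw [norm_mul, norm_pow]
      gcongr
      exact aux_bound n hn a l hl)
    have h1 : r.re ≤ sSup {x : ℝ | ∃ l : ℂ, l ^ n + ∑ i : Fin n, b i * l ^ (i : ℕ) = 0 ∧ x = l.re} := by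
      apply le_csSup
      · refine ⟨1 + ∑ i, ‖b i‖, ?_⟩
        rintro x ⟨l, hl, rfl⟩
        exact (Complex.re_le_norm l).trans (aux_bound n hn b l hl)
      · exact ⟨r, hr, rfl⟩
    have h2 := (Complex.re_le_norm (l - r)).trans hlr
    rw [Complex.sub_re] at h2
    linarith

/-- For every `n ≥ 1`, the maximum of the real parts of the roots of
`zⁿ + a_{n−1}z^{n−1} + … + a₀` is a continuous function of the coefficients. -/
theorem continuous_maxRootRe (n : ℕ) (hn : 1 ≤ n) :
    Continuous (maxRootRe n) := by
  rw [continuous_iff_continuousAt]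
  intro a
  rw [Metric.continuousAt_iff']
  intro ε hε
  have hp : (0:ℝ) < (ε / 2) ^ n := by positivity
  have c1 : Continuous fun b : Fin n → ℂ => ∑ i, ‖b i - a i‖ * (1 + ∑ j, ‖a j‖) ^ (i : ℕ) := by
    fun_prop
  have c2 : Continuous fun b : Fin n → ℂ => ∑ i, ‖a i - b i‖ * (1 + ∑ j, ‖b j‖) ^ (i : ℕ) := by
    fun_prop
  have e1 := c1.continuousAt.eventually_lt (continuousAt_const (x := a) (y := (ε / 2) ^ n))
    (by simpa using hp)
  have e2 := c2.continuousAt.eventually_lt (continuousAt_const (x := a) (y := (ε / 2) ^ n))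
    (by simpa using hp)
  filter_upwards [e1, e2] with b h1 h2
  have := aux_side n hn a b (ε / 2) (by positivity) h1.le
  have := aux_side n hn b a (ε / 2) (by positivity) h2.le
  rw [Real.dist_eq, abs_lt]
  constructor <;> linarith
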